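/- Let n ≥ 1 and let z₁, …, zₙ be complex numbers, and define the dual softmax functional softmax*_α(z₁,…,zₙ) := softmax_α(i·conj(z₁),…,i·conj(zₙ)). If there is a unique index i₀ with Im(z_{i₀}) > Im(zᵢ) for all i ≠ i₀, then softmax*_α(z₁,…,zₙ) converges to i·conj(z_{i₀}) as α → +∞; in particular, the index selected in the limit is the unique maximizer of the imaginary part Im(zᵢ). -/

import Mathlib

/-!
Softmax is the center of mass of the points `w i` with the complex weights `exp (α * w i)`. Since
`‖exp (α * w)‖ = exp (α * re w)`, as `α → +∞` the weight of the point with the largest real part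
dominates all the others; centers of mass do not change when all weights are rescaled, so dividing
by the dominant weight shows that they converge to that point. For the dual softmax the real parts
are `re (I * conj z) = im z`.
-/

open Filter Topology Asymptotics Complex
open scoped ComplexConjugate

section CenterMass

variable {β ι 𝕜 E : Type*} {l : Filter β} {s : Finset ι}
  [AddCommGroup E] [TopologicalSpace E] [ContinuousAdd E]

theorem tendsto_centerMass [Field 𝕜] [TopologicalSpace 𝕜] [ContinuousAdd 𝕜] [ContinuousInv₀ 𝕜]
    [Module 𝕜 E] [ContinuousSMul 𝕜 E] {w : β → ι → 𝕜} {w₀ : ι → 𝕜} {v : β → ι → E} {v₀ : ι → E}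
    (hw : ∀ i ∈ s, Tendsto (w · i) l (𝓝 (w₀ i))) (hv : ∀ i ∈ s, Tendsto (v · i) l (𝓝 (v₀ i)))
    (hw₀ : ∑ i ∈ s, w₀ i ≠ 0) :
    Tendsto (fun b => s.centerMass (w b) (v b)) l (𝓝 (s.centerMass w₀ v₀)) :=
  ((tendsto_finsetSum s hw).inv₀ hw₀).smul
    (tendsto_finsetSum s fun i hi => (hw i hi).smul (hv i hi))

theorem tendsto_centerMass_of_isLittleO [NormedField 𝕜] [Module 𝕜 E] [ContinuousSMul 𝕜 E]
    {w : β → ι → 𝕜} {v : β → ι → E} {v₀ : ι → E} {i₀ : ι} (hi₀ : i₀ ∈ s)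
    (hne : ∀ᶠ b in l, w b i₀ ≠ 0) (hw : ∀ i ∈ s, i ≠ i₀ → (w · i) =o[l] (w · i₀))
    (hv : ∀ i ∈ s, Tendsto (v · i) l (𝓝 (v₀ i))) :
    Tendsto (fun b => s.centerMass (w b) (v b)) l (𝓝 (v₀ i₀)) := by
  classical
  have hratio : ∀ i ∈ s, Tendsto (fun b => ((w b i₀)⁻¹ • w b) i) l
      (𝓝 (if i₀ = i then 1 else 0)) := by
    intro i hi
    simp only [Pi.smul_apply, smul_eq_mul, inv_mul_eq_div]
    split_ifs with h
    · subst h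
      exact tendsto_const_nhds.congr' (hne.mono fun b hb => (div_self hb).symm)
    · exact (hw i hi (Ne.symm h)).tendsto_div_nhds_zero
  have hlim := tendsto_centerMass hratio hv (by simp [hi₀])
  rw [s.centerMass_ite_eq i₀ v₀ hi₀] at hlim
  exact hlim.congr' (hne.mono fun b hb => s.centerMass_smul_left (v b) (inv_ne_zero hb))

end CenterMass

theorem isLittleO_cexp_comp_cexp_comp {β : Type*} {l : Filter β} {f g : β → ℂ} :
    (fun b => exp (f b)) =o[l] (fun b => exp (g b)) ↔
      Tendsto (fun b => (g b).re - (f b).re) l atTop := by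
  rw [← isLittleO_norm_norm]
  simp only [norm_exp, Real.isLittleO_exp_comp_exp_comp]

theorem isLittleO_cexp_ofReal_mul_atTop {w w' : ℂ} (h : w.re < w'.re) :
    (fun α : ℝ => exp (α * w)) =o[atTop] fun α : ℝ => exp (α * w') := by
  simp only [isLittleO_cexp_comp_cexp_comp, re_ofReal_mul, ← mul_sub]
  exact tendsto_id.atTop_mul_const (sub_pos.mpr h)

section Softmax

variable {ι : Type*} [Fintype ι]

/-- The complex softmax functional `softmax_α(w)`, with the value `0` where the denominator
vanishes. -/
noncomputable def softmax (α : ℝ) (w : ι → ℂ) : ℂ :=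
  (∑ i, w i * exp (α * w i)) / ∑ j, exp (α * w j)

/-- The dual softmax functional `softmax*_α(z)`, which weighs the entries by their imaginary parts
where `softmax` weighs them by their real parts. -/
noncomputable def dualSoftmax (α : ℝ) (z : ι → ℂ) : ℂ :=
  softmax α fun i => I * conj (z i)

theorem softmax_eq_centerMass (α : ℝ) (w : ι → ℂ) :
    softmax α w = Finset.univ.centerMass (fun i => exp (α * w i)) w := by
  simp only [softmax, Finset.centerMass, smul_eq_mul, div_eq_inv_mul, mul_comm (w _)]

theorem softmax_tendsto_argmax_re {w : ι → ℂ} {i₀ : ι}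
    (hmax : ∀ i, i ≠ i₀ → (w i).re < (w i₀).re) :
    Tendsto (fun α => softmax α w) atTop (𝓝 (w i₀)) := by
  simp only [softmax_eq_centerMass]
  exact tendsto_centerMass_of_isLittleO (Finset.mem_univ i₀)
    (Eventually.of_forall fun α => exp_ne_zero _)
    (fun i _ hi => isLittleO_cexp_ofReal_mul_atTop (hmax i hi))
    fun i _ => tendsto_const_nhds

theorem dual_softmax_tendsto_argmax_im_general {z : ι → ℂ} {i₀ : ι}
    (hmax : ∀ i, i ≠ i₀ → (z i).im < (z i₀).im) :
    Tendsto (fun α => dualSoftmax α z) atTop (𝓝 (I * conj (z i₀))) :=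
  softmax_tendsto_argmax_re (w := fun i => I * conj (z i)) fun i hi => by
    simpa using hmax i hi

end Softmax

/-- **Dual softmax at `α → +∞` selects the maximal imaginary part.** For complex numbers
`z₁, …, zₙ` (`n ≥ 1`), the dual softmax `softmax*_α(z) = softmax_α(i·conj z₁, …, i·conj zₙ)`
converges, as `α → +∞`, to `i·conj(z_{i₀})` where `i₀` is the unique index with
strictly maximal imaginary part. -/
theorem dual_softmax_tendsto_argmax_im (n : ℕ) (z : Fin (n + 1) → ℂ) (i₀ : Fin (n + 1))
    (hmax : ∀ i, i ≠ i₀ → (z i).im < (z i₀).im) :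
    Filter.Tendsto
      (fun α : ℝ =>
        (∑ i, (Complex.I * (starRingEnd ℂ) (z i)) *
            Complex.exp ((α : ℂ) * (Complex.I * (starRingEnd ℂ) (z i)))) /
          (∑ j, Complex.exp ((α : ℂ) * (Complex.I * (starRingEnd ℂ) (z j)))))
      Filter.atTop (nhds (Complex.I * (starRingEnd ℂ) (z i₀))) :=
  dual_softmax_tendsto_argmax_im_general hmax
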